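/- arXiv:2304.02334 — 3 statements merged into one kernel-verified Lean document; each statement's English description precedes it below -/
import Mathlib

section
/- Let σ ∈ (0, 1] and let f : ℝ → ℝ be a function bounded below such that f(ξ) + ξ²/2 ≥ σ for all ξ ∈ ℝ. Set m = inf_{ξ ∈ ℝ} min(f(ξ), 0), so that m ≤ 0 and m is finite. Then for every σ̃ ∈ (0, σ), the number k = (σ̃ − m)/(2(σ − m)) satisfies 0 < k < 1/2, and f(ξ) ≥ σ̃ − k·ξ² for all ξ ∈ ℝ. -/
open MeasureTheory

/-!
With `t = 2 k = (σ' - m) / (σ - m)`, the value `σ'` is the convex combination `(1 - t) m + t σ`.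
Since `f ξ` lies above both `m` and `σ - ξ² / 2`, it lies above
`(1 - t) m + t (σ - ξ² / 2) = σ' - k ξ²`.
-/

section LinearOrderedField

variable {𝕜 : Type*} [Field 𝕜] [LinearOrder 𝕜] [IsStrictOrderedRing 𝕜] {m σ σ' : 𝕜}

theorem sub_div_sub_mul_le_of_le_of_le_add {q y : 𝕜} (hmσ : m < σ) (hσ' : σ' ∈ Set.Icc m σ)
    (hm : m ≤ y) (hσ : σ ≤ y + q) : σ' - (σ' - m) / (σ - m) * q ≤ y := by
  have hpos : 0 < σ - m := sub_pos.2 hmσ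
  set t := (σ' - m) / (σ - m)
  have ht_nonneg : 0 ≤ t := div_nonneg (sub_nonneg.2 hσ'.1) hpos.le
  have ht_le_one : t ≤ 1 := (div_le_one hpos).2 (sub_le_sub_right hσ'.2 m)
  have ht_mul : t * (σ - m) = σ' - m := div_mul_cancel₀ _ hpos.ne'
  calc σ' - t * q = (1 - t) * m + t * (σ - q) := by linear_combination -ht_mul
    _ ≤ (1 - t) * y + t * y :=
      add_le_add (mul_le_mul_of_nonneg_left hm (sub_nonneg.2 ht_le_one))
        (mul_le_mul_of_nonneg_left (sub_le_iff_le_add.2 hσ) ht_nonneg)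
    _ = y := by ring

theorem sub_div_two_mul_sub_mem_Ioo (hσ' : σ' ∈ Set.Ioo m σ) :
    (σ' - m) / (2 * (σ - m)) ∈ Set.Ioo (0 : 𝕜) (1 / 2) := by
  have hpos : 0 < 2 * (σ - m) := mul_pos two_pos (sub_pos.2 (hσ'.1.trans hσ'.2))
  refine ⟨div_pos (sub_pos.2 hσ'.1) hpos, (div_lt_iff₀ hpos).2 ?_⟩
  linarith [hσ'.2]

end LinearOrderedField

theorem ciInf_min_const_le {ι α : Type*} [ConditionallyCompleteLinearOrder α] {f : ι → α}
    (hf : BddBelow (Set.range f)) (c : α) (i : ι) : ⨅ j, min (f j) c ≤ min (f i) c :=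
  ciInf_le (hf.range_comp_left fun _ _ hab ↦ min_le_min_right c hab) i

theorem parabola_lower_bound_general {X : Type*} [Nonempty X] {f q : X → ℝ} {σ m σ' k : ℝ}
    (hbdd : BddBelow (Set.range f)) (hf : ∀ x, σ ≤ f x + q x / 2)
    (hm : m = ⨅ x, min (f x) 0) (hσ' : σ' ∈ Set.Ioo 0 σ)
    (hk : k = (σ' - m) / (2 * (σ - m))) :
    m ≤ 0 ∧ (0 < k ∧ k < 1 / 2) ∧ ∀ x, σ' - k * q x ≤ f x := by
  have hm_le (x : X) : m ≤ min (f x) 0 := hm ▸ ciInf_min_const_le hbdd 0 x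
  have hm_nonpos : m ≤ 0 := (hm_le (Classical.arbitrary X)).trans (min_le_right _ _)
  have hmσ' : m < σ' := hm_nonpos.trans_lt hσ'.1
  refine ⟨hm_nonpos, hk ▸ sub_div_two_mul_sub_mem_Ioo ⟨hmσ', hσ'.2⟩, fun x ↦ ?_⟩
  calc σ' - k * q x = σ' - (σ' - m) / (σ - m) * (q x / 2) := by rw [hk, mul_comm 2, ← div_div]; ring
    _ ≤ f x := sub_div_sub_mul_le_of_le_of_le_add (hmσ'.trans hσ'.2) ⟨hmσ'.le, hσ'.2.le⟩
      ((hm_le x).trans (min_le_left _ _)) (hf x)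

/-- The key lower bound in the proof of the existence theorem: if `f + ξ²/2 ≥ σ` with
`σ ∈ (0,1]` and `m = inf min(f, 0)`, then for every `σ̃ ∈ (0, σ)` the number
`k = (σ̃ - m)/(2(σ - m))` lies in `(0, 1/2)` and `f(ξ) ≥ σ̃ - k ξ²` for all `ξ`. -/
theorem parabola_lower_bound
    (σ : ℝ) (hσ : σ ∈ Set.Ioc (0 : ℝ) 1)
    (f : ℝ → ℝ) (hbdd : BddBelow (Set.range f))
    (hf : ∀ ξ : ℝ, σ ≤ f ξ + ξ ^ 2 / 2)
    (m : ℝ) (hm : m = ⨅ ξ : ℝ, min (f ξ) 0)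
    (σ' : ℝ) (hσ' : σ' ∈ Set.Ioo 0 σ)
    (k : ℝ) (hk : k = (σ' - m) / (2 * (σ - m))) :
    m ≤ 0 ∧ (0 < k ∧ k < 1 / 2) ∧ ∀ ξ : ℝ, σ' - k * ξ ^ 2 ≤ f ξ :=
  parabola_lower_bound_general hbdd hf hm hσ' hk
end

section
/- Let W ∈ L¹(ℝ, ℝ) be even and let 0 < c₀. Suppose c ↦ η(c) is a continuously differentiable map from (0, c₀) into H²(ℝ, ℝ) such that for each c ∈ (0, c₀), sup_ℝ η(c) < 1 and η(c) satisfies η'' − 2(W ⋆ η) + c² η + c² η²/(2(1 − η)) + (η')²/(2(1 − η)) + 2(W ⋆ η)·η = 0 on ℝ. Define Ẽ(c) = (c²/8)·∫ η(c)²/(1 − η(c)) + (1/8)·∫ (η(c)')²/(1 − η(c)) + (1/4)·∫ (W ⋆ η(c))·η(c) and P̃(c) = (c/4)·∫ η(c)²/(1 − η(c)). Then Ẽ and P̃ are differentiable on (0, c₀) and Ẽ'(c) = c·P̃'(c) for all c ∈ (0, c₀). -/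
open MeasureTheory Filter

/-!
The action `S_c(f) = -(c²/8) ∫ f²/(1 - f) + (1/8) ∫ (f')²/(1 - f) + (1/4) ∫ (W ⋆ f) f` satisfies
`S_c(η(c)) = E(c) - c P(c)`, and the travelling-wave equation divided by `1 - η` is the
Euler–Lagrange equation of `S_c`. Hence differentiating `S_c(η(c))` in `c` only sees the explicit
dependence on `c`, so `(E - c P)' = -P`, that is, `E' = c P'`.

Each of the three integrals is differentiable along the branch because its remainder at first order
is quadratic in the `H¹` distance; the Sobolev embedding keeps `1 - η` uniformly positive near a
given speed.
-/

open scoped Topology ENNReal InnerProductSpace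

noncomputable section

lemma hasDerivAt_of_norm_sub_sub_le_sq {E F : Type*} [NormedAddCommGroup E] [NormedSpace ℝ E]
    [NormedAddCommGroup F] [NormedSpace ℝ F] {L : E →L[ℝ] F} {w : ℝ → E} {w' : E} {f : ℝ → F}
    {c K : ℝ} (hw : HasDerivAt w w' c)
    (hf : ∀ᶠ d in 𝓝 c, ‖f d - f c - L (w d - w c)‖ ≤ K * ‖w d - w c‖ ^ 2) :
    HasDerivAt f (L w') c := by
  have remainder : (fun d => f d - f c - L (w d - w c)) =o[𝓝 c] fun d => d - c := by
    have hw_tendsto : Tendsto (fun d => ‖w d - w c‖) (𝓝 c) (𝓝 0) :=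
      tendsto_iff_norm_sub_tendsto_zero.1 hw.continuousAt.tendsto
    refine ((Asymptotics.IsBigO.of_bound K ?_).trans_isLittleO
      (Asymptotics.isLittleO_pow_id one_lt_two |>.comp_tendsto hw_tendsto)).trans_isBigO
      hw.isBigO_sub.norm_left
    filter_upwards [hf] with d hd
    simpa using hd
  have hL := L.hasFDerivAt.comp_hasDerivAt c hw
  rw [hasDerivAt_iff_isLittleO] at hL ⊢
  refine (remainder.add hL).congr_left fun d => ?_
  simp only [Function.comp_apply, map_sub]
  abel

lemma abs_div_le_div_of_le {p w R δ : ℝ} (hδ : 0 < δ) (hδw : δ ≤ w) (hp : |p| ≤ R) :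
    |p / w| ≤ R / δ := by
  rw [abs_div, abs_of_pos (hδ.trans_le hδw)]
  have := (abs_nonneg p).trans hp
  gcongr

section L2

variable {α : Type*} [MeasurableSpace α] {μ : Measure α}

lemma L2_inner_eq_integral_mul {u v : Lp ℝ 2 μ} {f g : α → ℝ} (hu : u =ᵐ[μ] f)
    (hv : v =ᵐ[μ] g) : ⟪u, v⟫_ℝ = ∫ x, f x * g x ∂μ := by
  rw [L2.inner_def]
  refine integral_congr_ae ?_
  filter_upwards [hu, hv] with x hux hvx
  rw [hux, hvx, Real.inner_apply]

lemma L2_norm_sq_eq_integral_sq {u : Lp ℝ 2 μ} {f : α → ℝ} (hu : u =ᵐ[μ] f) :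
    ‖u‖ ^ 2 = ∫ x, f x ^ 2 ∂μ := by
  simp only [← real_inner_self_eq_norm_sq, L2_inner_eq_integral_mul hu hu, pow_two (f _)]

lemma L2_sub_ae_eq {u v : Lp ℝ 2 μ} {f g : α → ℝ} (hu : u =ᵐ[μ] f) (hv : v =ᵐ[μ] g) :
    (u - v : Lp ℝ 2 μ) =ᵐ[μ] fun x => f x - g x :=
  (Lp.coeFn_sub u v).trans (hu.sub hv)

lemma memLp_of_coeFn_ae_eq {E : Type*} [NormedAddCommGroup E] {p : ℝ≥0∞} {u : Lp E p μ}
    {f : α → E} (hu : u =ᵐ[μ] f) : MemLp f p μ :=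
  (memLp_congr_ae hu).1 (Lp.memLp u)

lemma hasDerivAt_integral_mul_L2 {a : α → ℝ} (ha : MemLp a 2 μ) {u : ℝ → Lp ℝ 2 μ}
    {u' : Lp ℝ 2 μ} {c : ℝ} (hu : HasDerivAt u u' c) :
    HasDerivAt (fun d => ∫ x, a x * u d x ∂μ) (∫ x, a x * u' x ∂μ) c := by
  have inner_eq (v : Lp ℝ 2 μ) : innerSL ℝ (ha.toLp a) v = ∫ x, a x * v x ∂μ :=
    L2_inner_eq_integral_mul ha.coeFn_toLp .rfl
  simpa only [Function.comp_def, inner_eq] using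
    (innerSL ℝ (ha.toLp a)).hasFDerivAt.comp_hasDerivAt c hu

lemma memLp_div_of_ae_le {p : ℝ≥0∞} {g w : α → ℝ} {δ : ℝ} (hδ : 0 < δ) (hg : MemLp g p μ)
    (hw : AEMeasurable w μ) (hδw : ∀ᵐ x ∂μ, δ ≤ w x) : MemLp (fun x => g x / w x) p μ := by
  refine hg.of_le_mul (c := δ⁻¹) (hg.aemeasurable.div hw).aestronglyMeasurable ?_
  filter_upwards [hδw] with x hx
  rw [norm_div, Real.norm_of_nonneg (hδ.le.trans hx), div_eq_inv_mul]
  gcongr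

lemma integrable_sq_div_of_ae_le {g w : α → ℝ} {δ : ℝ} (hδ : 0 < δ) (hg : MemLp g 2 μ)
    (hw : AEMeasurable w μ) (hδw : ∀ᵐ x ∂μ, δ ≤ w x) : Integrable (fun x => g x ^ 2 / w x) μ :=
  memLp_one_iff_integrable.1 <|
    memLp_div_of_ae_le hδ (memLp_one_iff_integrable.2 hg.integrable_sq) hw hδw

lemma memLp_sq_div_of_ae_le {p : ℝ≥0∞} {g w : α → ℝ} {δ R : ℝ} (hδ : 0 < δ) (hg : MemLp g p μ)
    (hw : AEMeasurable w μ) (hδw : ∀ᵐ x ∂μ, δ ≤ w x) (hgR : ∀ᵐ x ∂μ, |g x| ≤ R) :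
    MemLp (fun x => (g x / w x) ^ 2) p μ := by
  have hgw := memLp_div_of_ae_le hδ hg hw hδw
  have hgw_le : ∀ᵐ x ∂μ, |g x / w x| ≤ R / δ := by
    filter_upwards [hδw, hgR] with x using abs_div_le_div_of_le hδ
  simpa only [sq] using hgw.mul' (memLp_top_of_bound hgw.aestronglyMeasurable _ hgw_le)

end L2

lemma sq_div_one_sub_remainder {s p s₁ p₁ : ℝ} (hs : 1 - s ≠ 0) (hs₁ : 1 - s₁ ≠ 0) :
    p₁ ^ 2 / (1 - s₁) - p ^ 2 / (1 - s)
        - (2 * (p / (1 - s) * (p₁ - p)) + (p / (1 - s)) ^ 2 * (s₁ - s)) =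
      (p / (1 - s) * (s₁ - s) + (p₁ - p)) ^ 2 / (1 - s₁) := by
  field_simp
  ring

lemma sq_mul_add_div_le {a h k w B δ : ℝ} (hδ : 0 < δ) (hδw : δ ≤ w) (ha : |a| ≤ B) :
    (a * h + k) ^ 2 / w ≤ 2 * (B ^ 2 + 1) / δ * (h ^ 2 + k ^ 2) := by
  have ha_sq : a ^ 2 ≤ B ^ 2 := sq_le_sq.2 (ha.trans (le_abs_self B))
  have hnum : (a * h + k) ^ 2 ≤ 2 * (B ^ 2 + 1) * (h ^ 2 + k ^ 2) := by
    calc (a * h + k) ^ 2 ≤ 2 * ((a * h) ^ 2 + k ^ 2) := add_sq_le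
      _ ≤ 2 * (B ^ 2 * h ^ 2 + k ^ 2) := by rw [mul_pow]; gcongr
      _ ≤ 2 * (B ^ 2 + 1) * (h ^ 2 + k ^ 2) := by nlinarith [sq_nonneg h, sq_nonneg (B * k)]
  rw [div_mul_eq_mul_div]
  gcongr

section SqDivOneSub

variable {α : Type*} [MeasurableSpace α] {μ : Measure α}

lemma abs_integral_sq_div_one_sub_remainder_le {f g f₁ g₁ : α → ℝ} {δ R : ℝ} (hδ : 0 < δ)
    (hf : MemLp f 2 μ) (hg : MemLp g 2 μ) (hf₁ : MemLp f₁ 2 μ) (hg₁ : MemLp g₁ 2 μ)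
    (hfδ : ∀ᵐ x ∂μ, δ ≤ 1 - f x) (hf₁δ : ∀ᵐ x ∂μ, δ ≤ 1 - f₁ x) (hgR : ∀ᵐ x ∂μ, |g x| ≤ R) :
    |(∫ x, g₁ x ^ 2 / (1 - f₁ x) ∂μ) - (∫ x, g x ^ 2 / (1 - f x) ∂μ)
        - (2 * (∫ x, g x / (1 - f x) * (g₁ x - g x) ∂μ)
          + ∫ x, (g x / (1 - f x)) ^ 2 * (f₁ x - f x) ∂μ)| ≤
      2 * ((R / δ) ^ 2 + 1) / δ * ((∫ x, (f₁ x - f x) ^ 2 ∂μ) + ∫ x, (g₁ x - g x) ^ 2 ∂μ) := by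
  have hw := hf.aemeasurable.const_sub 1
  have hdf : MemLp (fun x => f₁ x - f x) 2 μ := hf₁.sub hf
  have hdg : MemLp (fun x => g₁ x - g x) 2 μ := hg₁.sub hg
  have hI₁ := integrable_sq_div_of_ae_le hδ hg₁ (hf₁.aemeasurable.const_sub 1) hf₁δ
  have hI := integrable_sq_div_of_ae_le hδ hg hw hfδ
  have hIdg : Integrable (fun x => 2 * (g x / (1 - f x) * (g₁ x - g x))) μ :=
    ((memLp_div_of_ae_le hδ hg hw hfδ).integrable_mul hdg).const_mul 2
  have hIdf : Integrable (fun x => (g x / (1 - f x)) ^ 2 * (f₁ x - f x)) μ :=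
    (memLp_sq_div_of_ae_le hδ hg hw hfδ hgR).integrable_mul hdf
  have integral_remainder :
      (∫ x, g₁ x ^ 2 / (1 - f₁ x) ∂μ) - (∫ x, g x ^ 2 / (1 - f x) ∂μ)
          - (2 * (∫ x, g x / (1 - f x) * (g₁ x - g x) ∂μ)
            + ∫ x, (g x / (1 - f x)) ^ 2 * (f₁ x - f x) ∂μ) =
        ∫ x, g₁ x ^ 2 / (1 - f₁ x) - g x ^ 2 / (1 - f x)
          - (2 * (g x / (1 - f x) * (g₁ x - g x)) + (g x / (1 - f x)) ^ 2 * (f₁ x - f x)) ∂μ := by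
    rw [integral_sub (by fun_prop) (by fun_prop), integral_sub hI₁ hI, integral_add hIdg hIdf,
      integral_const_mul]
  rw [integral_remainder, ← Real.norm_eq_abs,
    ← integral_add hdf.integrable_sq hdg.integrable_sq, ← integral_const_mul]
  refine norm_integral_le_of_norm_le ((hdf.integrable_sq.add hdg.integrable_sq).const_mul _) ?_
  filter_upwards [hfδ, hf₁δ, hgR] with x hx hx₁ hgx
  have hpos₁ : 0 < 1 - f₁ x := hδ.trans_le hx₁
  rw [sq_div_one_sub_remainder (hδ.trans_le hx).ne' hpos₁.ne',
    Real.norm_of_nonneg (by positivity)]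
  exact sq_mul_add_div_le hδ hx₁ (abs_div_le_div_of_le hδ hx hgx)

lemma hasDerivAt_integral_sq_div_one_sub {u v : ℝ → Lp ℝ 2 μ} {u' v' : Lp ℝ 2 μ}
    {f g : ℝ → α → ℝ} {c δ R : ℝ} (hu : HasDerivAt u u' c) (hv : HasDerivAt v v' c)
    (huf : ∀ᶠ d in 𝓝 c, u d =ᵐ[μ] f d) (hvg : ∀ᶠ d in 𝓝 c, v d =ᵐ[μ] g d) (hδ : 0 < δ)
    (hfδ : ∀ᶠ d in 𝓝 c, ∀ᵐ x ∂μ, δ ≤ 1 - f d x) (hgR : ∀ᵐ x ∂μ, |g c x| ≤ R) :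
    HasDerivAt (fun d => ∫ x, g d x ^ 2 / (1 - f d x) ∂μ)
      (2 * (∫ x, g c x / (1 - f c x) * v' x ∂μ)
        + ∫ x, (g c x / (1 - f c x)) ^ 2 * u' x ∂μ) c := by
  have huc := huf.self_of_nhds
  have hvc := hvg.self_of_nhds
  have hcδ := hfδ.self_of_nhds
  have hf := memLp_of_coeFn_ae_eq huc
  have hg := memLp_of_coeFn_ae_eq hvc
  have hw := hf.aemeasurable.const_sub 1
  have hφ := memLp_div_of_ae_le hδ hg hw hcδ
  have hφ_sq := memLp_sq_div_of_ae_le hδ hg hw hcδ hgR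
  let variation : Lp ℝ 2 μ × Lp ℝ 2 μ →L[ℝ] ℝ :=
    2 • (innerSL ℝ (hφ.toLp _)).comp (.snd ℝ _ _)
      + (innerSL ℝ (hφ_sq.toLp _)).comp (.fst ℝ _ _)
  have variation_apply {h k : Lp ℝ 2 μ} {f₀ g₀ : α → ℝ} (hh : h =ᵐ[μ] f₀) (hk : k =ᵐ[μ] g₀) :
      variation (h, k) = 2 * (∫ x, g c x / (1 - f c x) * g₀ x ∂μ)
        + ∫ x, (g c x / (1 - f c x)) ^ 2 * f₀ x ∂μ := by
    simp [variation, L2_inner_eq_integral_mul hφ.coeFn_toLp hk,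
      L2_inner_eq_integral_mul hφ_sq.coeFn_toLp hh]
  rw [← variation_apply .rfl .rfl]
  refine hasDerivAt_of_norm_sub_sub_le_sq (K := 2 * ((R / δ) ^ 2 + 1) / δ * 2)
    (hu.prodMk hv) ?_
  filter_upwards [huf, hvg, hfδ] with d hud hvd hdδ
  have huv : ‖u d - u c‖ ^ 2 + ‖v d - v c‖ ^ 2 ≤ 2 * ‖(u d, v d) - (u c, v c)‖ ^ 2 := by
    rw [two_mul]
    gcongr
    exacts [norm_fst_le ((u d, v d) - (u c, v c)), norm_snd_le ((u d, v d) - (u c, v c))]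
  have hdu := L2_sub_ae_eq hud huc
  have hdv := L2_sub_ae_eq hvd hvc
  rw [L2_norm_sq_eq_integral_sq hdu, L2_norm_sq_eq_integral_sq hdv] at huv
  rw [Prod.mk_sub_mk, variation_apply hdu hdv, mul_assoc]
  exact (abs_integral_sq_div_one_sub_remainder_le hδ hf hg (memLp_of_coeFn_ae_eq hud)
    (memLp_of_coeFn_ae_eq hvd) hcδ hdδ hgR).trans (by gcongr; exact huv)

end SqDivOneSub

section Convolution

variable {G : Type*} [AddGroup G] [MeasurableSpace G] [MeasurableAdd₂ G] {μ : Measure G}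
  [μ.IsAddRightInvariant]

variable (μ) in
/-- Translation of `L²` classes, `(τ_t f)(x) = f (x - t)`. -/
def L2Translation (t : G) : Lp ℝ 2 μ →ₗᵢ[ℝ] Lp ℝ 2 μ :=
  Lp.compMeasurePreservingₗᵢ ℝ (fun x => x - t) (measurePreserving_sub_right μ t)

lemma L2Translation_ae_eq {u : Lp ℝ 2 μ} {f : G → ℝ} (hu : u =ᵐ[μ] f) (t : G) :
    L2Translation μ t u =ᵐ[μ] fun x => f (x - t) :=
  (Lp.coeFn_compMeasurePreserving u _).trans
    ((measurePreserving_sub_right μ t).quasiMeasurePreserving.ae_eq_comp hu)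

lemma inner_L2Translation_neg (t : G) (u v : Lp ℝ 2 μ) :
    ⟪L2Translation μ (-t) u, v⟫_ℝ = ⟪L2Translation μ t v, u⟫_ℝ := by
  rw [L2_inner_eq_integral_mul (L2Translation_ae_eq .rfl (-t)) .rfl,
    L2_inner_eq_integral_mul (L2Translation_ae_eq .rfl t) .rfl,
    ← integral_sub_right_eq_self _ t]
  simp only [sub_neg_eq_add, sub_add_cancel, mul_comm]

variable [MeasurableNeg G] [SFinite μ] {W : G → ℝ}

lemma integrable_mul_comp_sub_mul {f g : G → ℝ} (hW : Integrable W μ) (hf : MemLp f 2 μ)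
    (hg : MemLp g 2 μ) :
    Integrable (fun z : G × G => W z.2 * f (z.1 - z.2) * g z.1) (μ.prod μ) := by
  have hWf : Integrable (fun z : G × G => |W z.2| * f (z.1 - z.2) ^ 2) (μ.prod μ) :=
    hW.norm.convolution_integrand (ContinuousLinearMap.mul ℝ ℝ) hf.integrable_sq
  have hWg : Integrable (fun z : G × G => g z.1 ^ 2 * |W z.2|) (μ.prod μ) :=
    hg.integrable_sq.mul_prod hW.norm
  refine (hWf.add hWg).mono' ?_ (.of_forall fun z => ?_)
  · exact (hW.aestronglyMeasurable.convolution_integrand (ContinuousLinearMap.mul ℝ ℝ)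
      hf.aestronglyMeasurable).mul hg.aestronglyMeasurable.comp_fst
  · have amgm : |f (z.1 - z.2)| * |g z.1| ≤ f (z.1 - z.2) ^ 2 + g z.1 ^ 2 := by
      rw [← sq_abs (f _), ← sq_abs (g _)]
      nlinarith [sq_nonneg (|f (z.1 - z.2)| - |g z.1|), sq_nonneg |f (z.1 - z.2)|,
        sq_nonneg |g z.1|]
    calc ‖W z.2 * f (z.1 - z.2) * g z.1‖ = |W z.2| * (|f (z.1 - z.2)| * |g z.1|) := by
          simp only [Real.norm_eq_abs, abs_mul, mul_assoc]
      _ ≤ |W z.2| * (f (z.1 - z.2) ^ 2 + g z.1 ^ 2) := by gcongr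
      _ = |W z.2| * f (z.1 - z.2) ^ 2 + g z.1 ^ 2 * |W z.2| := by ring

lemma integrable_mul_inner_L2Translation (hW : Integrable W μ) (u v : Lp ℝ 2 μ) :
    Integrable (fun t => W t * ⟪L2Translation μ t u, v⟫_ℝ) μ := by
  refine (integrable_mul_comp_sub_mul hW (Lp.memLp u) (Lp.memLp v)).integral_prod_right.congr
    (.of_forall fun t => ?_)
  simp only [mul_assoc, integral_const_mul,
    L2_inner_eq_integral_mul (L2Translation_ae_eq (u := u) .rfl t) (v := v) .rfl]

/-- The bilinear form `(f, g) ↦ ∫ (W ⋆ f) g` on `L²`, as an average of translations; in this form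
its continuity is immediate from `‖τ_t f‖ = ‖f‖`. -/
def convolutionForm (hW : Integrable W μ) : Lp ℝ 2 μ →L[ℝ] Lp ℝ 2 μ →L[ℝ] ℝ :=
  LinearMap.mkContinuous₂
    (LinearMap.mk₂ ℝ (fun u v => ∫ t, W t * ⟪L2Translation μ t u, v⟫_ℝ ∂μ)
      (fun u₁ u₂ v => by
        simp only [map_add, inner_add_left, mul_add]
        exact integral_add (integrable_mul_inner_L2Translation hW u₁ v)
          (integrable_mul_inner_L2Translation hW u₂ v))
      (fun r u v => by
        simp only [map_smul, real_inner_smul_left, mul_left_comm _ r, integral_const_mul,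
          smul_eq_mul])
      (fun u v₁ v₂ => by
        simp only [inner_add_right, mul_add]
        exact integral_add (integrable_mul_inner_L2Translation hW u v₁)
          (integrable_mul_inner_L2Translation hW u v₂))
      (fun r u v => by
        simp only [real_inner_smul_right, mul_left_comm _ r, integral_const_mul, smul_eq_mul]))
    (∫ t, ‖W t‖ ∂μ) fun u v => by
      rw [mul_assoc, ← integral_mul_const]
      refine norm_integral_le_of_norm_le (hW.norm.mul_const _) (.of_forall fun t => ?_)
      rw [norm_mul, ← (L2Translation μ t).norm_map u]
      gcongr
      exact norm_inner_le_norm _ _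

lemma convolutionForm_apply (hW : Integrable W μ) (u v : Lp ℝ 2 μ) :
    convolutionForm hW u v = ∫ t, W t * ⟪L2Translation μ t u, v⟫_ℝ ∂μ :=
  rfl

lemma convolutionForm_comm [μ.IsNegInvariant] (hW : Integrable W μ) (hW_even : ∀ x, W (-x) = W x)
    (u v : Lp ℝ 2 μ) : convolutionForm hW u v = convolutionForm hW v u := by
  rw [convolutionForm_apply, convolutionForm_apply, ← integral_neg_eq_self]
  simp only [hW_even, inner_L2Translation_neg]

lemma convolutionForm_eq_integral (hW : Integrable W μ) {u v : Lp ℝ 2 μ} {f g : G → ℝ}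
    (hu : u =ᵐ[μ] f) (hv : v =ᵐ[μ] g) :
    convolutionForm hW u v = ∫ x, (∫ t, W t * f (x - t) ∂μ) * g x ∂μ := by
  simp only [convolutionForm_apply, L2_inner_eq_integral_mul (L2Translation_ae_eq hu _) hv,
    ← integral_mul_const, ← integral_const_mul, ← mul_assoc]
  exact (integral_integral_swap (f := fun x t => W t * f (x - t) * g x)
    (integrable_mul_comp_sub_mul hW (memLp_of_coeFn_ae_eq hu) (memLp_of_coeFn_ae_eq hv))).symm

lemma hasDerivAt_convolutionForm_self [μ.IsNegInvariant] (hW : Integrable W μ)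
    (hW_even : ∀ x, W (-x) = W x) {u : ℝ → Lp ℝ 2 μ} {u' : Lp ℝ 2 μ} {c : ℝ}
    (hu : HasDerivAt u u' c) :
    HasDerivAt (fun d => convolutionForm hW (u d) (u d)) (2 * convolutionForm hW (u c) u') c := by
  refine ((convolutionForm hW).hasDerivAt_of_bilinear (fun _ => hu) fun _ => hu).congr_deriv ?_
  rw [convolutionForm_comm hW hW_even u', two_mul]

end Convolution

lemma sq_le_integral_sq_add_integral_sq_deriv {f f' : ℝ → ℝ} (hf : ∀ x, HasDerivAt f (f' x) x)
    (hf_mem : MemLp f 2) (hf'_mem : MemLp f' 2) (x : ℝ) :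
    f x ^ 2 ≤ (∫ y, f y ^ 2) + ∫ y, f' y ^ 2 := by
  have hsq : Integrable fun y => f y ^ 2 + f' y ^ 2 :=
    hf_mem.integrable_sq.add hf'_mem.integrable_sq
  have hff' : Integrable fun y => 2 * f y * f' y := (hf_mem.const_mul 2).integrable_mul hf'_mem
  have hderiv (y : ℝ) : HasDerivAt (fun y => f y ^ 2) (2 * f y * f' y) y :=
    ((hf y).pow 2).congr_deriv (by simp)
  have hlim := tendsto_zero_of_hasDerivAt_of_integrableOn_Iic (a := x) (fun y _ => hderiv y)
    hff'.integrableOn hf_mem.integrable_sq.integrableOn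
  calc f x ^ 2 = ∫ y in Set.Iic x, 2 * f y * f' y := by
        rw [integral_Iic_of_hasDerivAt_of_tendsto' (fun y _ => hderiv y) hff'.integrableOn hlim,
          sub_zero]
    _ ≤ ∫ y in Set.Iic x, (f y ^ 2 + f' y ^ 2) :=
        integral_mono hff'.integrableOn hsq.integrableOn fun y => two_mul_le_add_sq (f y) (f' y)
    _ ≤ ∫ y, (f y ^ 2 + f' y ^ 2) :=
        setIntegral_le_integral hsq (.of_forall fun y => by positivity)
    _ = (∫ y, f y ^ 2) + ∫ y, f' y ^ 2 :=
        integral_add hf_mem.integrable_sq hf'_mem.integrable_sq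

lemma exists_forall_abs_le_of_memLp_deriv {f : ℝ → ℝ} (hf : Differentiable ℝ f)
    (hf_mem : MemLp f 2) (hf'_mem : MemLp (deriv f) 2) : ∃ R, ∀ x, |f x| ≤ R :=
  ⟨_, fun x => Real.abs_le_sqrt
    (sq_le_integral_sq_add_integral_sq_deriv (fun y => (hf y).hasDerivAt) hf_mem hf'_mem x)⟩

/-- `u'` is the derivative at `c` of the branch `η` in `H¹(ℝ)`, and `v'` is its weak derivative.
The curves `u`, `v` consist of the `L²` classes of `η d` and of its space derivative, so that
differentiability in `H¹` is differentiability of both in `L²`. -/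
structure HasH1DerivAt (η : ℝ → ℝ → ℝ) (u v : ℝ → Lp ℝ 2 (volume : Measure ℝ))
    (u' v' : Lp ℝ 2 (volume : Measure ℝ)) (c : ℝ) : Prop where
  differentiable : ∀ᶠ d in 𝓝 c, Differentiable ℝ (η d)
  ae_eq : ∀ᶠ d in 𝓝 c, u d =ᵐ[volume] η d
  ae_eq_deriv : ∀ᶠ d in 𝓝 c, v d =ᵐ[volume] deriv (η d)
  hasDerivAt : HasDerivAt u u' c
  hasDerivAt_deriv : HasDerivAt v v' c

namespace HasH1DerivAt

variable {η : ℝ → ℝ → ℝ} {u v : ℝ → Lp ℝ 2 (volume : Measure ℝ)}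
  {u' v' : Lp ℝ 2 (volume : Measure ℝ)} {c : ℝ}

lemma memLp (h : HasH1DerivAt η u v u' v' c) : MemLp (η c) 2 :=
  memLp_of_coeFn_ae_eq h.ae_eq.self_of_nhds

lemma memLp_deriv (h : HasH1DerivAt η u v u' v' c) : MemLp (deriv (η c)) 2 :=
  memLp_of_coeFn_ae_eq h.ae_eq_deriv.self_of_nhds

lemma tendstoUniformly (h : HasH1DerivAt η u v u' v' c) : TendstoUniformly η (η c) (𝓝 c) := by
  have hlim : Tendsto (fun d => ‖u d - u c‖ ^ 2 + ‖v d - v c‖ ^ 2) (𝓝 c) (𝓝 0) := by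
    simpa using ((tendsto_iff_norm_sub_tendsto_zero.1 h.hasDerivAt.continuousAt.tendsto).pow 2).add
      ((tendsto_iff_norm_sub_tendsto_zero.1 h.hasDerivAt_deriv.continuousAt.tendsto).pow 2)
  rw [Metric.tendstoUniformly_iff]
  intro ε hε
  filter_upwards [h.differentiable, h.ae_eq, h.ae_eq_deriv,
    hlim.eventually_lt_const (sq_pos_of_pos hε)] with d hd hud hvd hlt x
  have hdu := L2_sub_ae_eq hud h.ae_eq.self_of_nhds
  have hdv := L2_sub_ae_eq hvd h.ae_eq_deriv.self_of_nhds
  rw [L2_norm_sq_eq_integral_sq hdu, L2_norm_sq_eq_integral_sq hdv] at hlt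
  rw [dist_comm, Real.dist_eq]
  refine abs_lt_of_sq_lt_sq (lt_of_le_of_lt ?_ hlt) hε.le
  exact sq_le_integral_sq_add_integral_sq_deriv (f := fun x => η d x - η c x)
    (fun y => (hd y).hasDerivAt.sub (h.differentiable.self_of_nhds y).hasDerivAt)
    (memLp_of_coeFn_ae_eq hdu) (memLp_of_coeFn_ae_eq hdv) x

lemma exists_eventually_le_one_sub (h : HasH1DerivAt η u v u' v' c)
    (hsup : ∃ M < 1, ∀ x, η c x ≤ M) : ∃ δ > 0, ∀ᶠ d in 𝓝 c, ∀ x, δ ≤ 1 - η d x := by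
  obtain ⟨M, hM, hηM⟩ := hsup
  have hδ : 0 < (1 - M) / 2 := by linarith
  refine ⟨(1 - M) / 2, hδ, ?_⟩
  filter_upwards [Metric.tendstoUniformly_iff.1 h.tendstoUniformly _ hδ] with d hd x
  have hdx := (abs_lt.1 (hd x)).1
  linarith [hηM x]

lemma integral_mul_eq_neg (h : HasH1DerivAt η u v u' v' c) {φ φ' : ℝ → ℝ}
    (hφ : ∀ x, HasDerivAt φ (φ' x) x) (hφ_mem : MemLp φ 2) (hφ'_mem : MemLp φ' 2) :
    ∫ x, φ x * v' x = -∫ x, φ' x * u' x := by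
  have hv := hasDerivAt_integral_mul_L2 hφ_mem h.hasDerivAt_deriv
  have hu := (hasDerivAt_integral_mul_L2 hφ'_mem h.hasDerivAt).neg
  refine hv.unique (hu.congr_of_eventuallyEq ?_)
  filter_upwards [h.differentiable, h.ae_eq, h.ae_eq_deriv] with d hd hud hvd
  have hη := memLp_of_coeFn_ae_eq hud
  have hη' := memLp_of_coeFn_ae_eq hvd
  calc ∫ x, φ x * v d x = ∫ x, φ x * deriv (η d) x :=
        integral_congr_ae (hvd.mono fun x hx => by simp only [hx])
    _ = -∫ x, φ' x * η d x :=
        integral_mul_deriv_eq_deriv_mul_of_integrable (fun x _ => hφ x)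
          (fun x _ => (hd x).hasDerivAt) (hφ_mem.integrable_mul hη')
          (hφ'_mem.integrable_mul hη) (hφ_mem.integrable_mul hη)
    _ = -∫ x, φ' x * u d x := by
        congr 1
        exact integral_congr_ae (hud.mono fun x hx => by simp only [hx])

end HasH1DerivAt

section DarkSoliton

/-- The travelling-wave equation `J_c(f) = 0` of speed `c` for the nonlocal Gross–Pitaevskii
equation, in the hydrodynamic variable `f = 1 - |u|²`. -/
def IsDarkSoliton (W : ℝ → ℝ) (c : ℝ) (f : ℝ → ℝ) : Prop :=
  ∀ x, deriv (deriv f) x - 2 * (∫ t, W t * f (x - t)) + c ^ 2 * f x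
    + c ^ 2 * f x ^ 2 / (2 * (1 - f x)) + deriv f x ^ 2 / (2 * (1 - f x))
    + 2 * (∫ t, W t * f (x - t)) * f x = 0

/-- The energy of a wave of speed `c` with hydrodynamic profile `f`. -/
def hydroEnergy (W : ℝ → ℝ) (c : ℝ) (f : ℝ → ℝ) : ℝ :=
  c ^ 2 / 8 * (∫ x, f x ^ 2 / (1 - f x)) + 1 / 8 * (∫ x, deriv f x ^ 2 / (1 - f x))
    + 1 / 4 * ∫ x, (∫ t, W t * f (x - t)) * f x

/-- The momentum of a wave of speed `c` with hydrodynamic profile `f`. -/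
def hydroMomentum (c : ℝ) (f : ℝ → ℝ) : ℝ :=
  c / 4 * ∫ x, f x ^ 2 / (1 - f x)

variable {W : ℝ → ℝ} {c : ℝ}

lemma hasDerivAt_deriv_div_one_sub {f : ℝ → ℝ} {x : ℝ} (hf : DifferentiableAt ℝ f x)
    (hf' : DifferentiableAt ℝ (deriv f) x) (hx : 1 - f x ≠ 0) :
    HasDerivAt (fun y => deriv f y / (1 - f y))
      (deriv (deriv f) x / (1 - f x) + (deriv f x / (1 - f x)) ^ 2) x := by
  refine (hf'.hasDerivAt.div (hf.hasDerivAt.const_sub 1) hx).congr_deriv ?_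
  field_simp
  ring

-- Dividing `J_c(f) = 0` by `1 - f` turns it into the Euler–Lagrange equation of the action.
lemma IsDarkSoliton.convolution_eq {f : ℝ → ℝ} (hf : IsDarkSoliton W c f) {x : ℝ}
    (hx : 1 - f x ≠ 0) :
    4 * ∫ t, W t * f (x - t) =
      c ^ 2 * (2 * (f x / (1 - f x)) + (f x / (1 - f x)) ^ 2)
        + 2 * (deriv (deriv f) x / (1 - f x) + (deriv f x / (1 - f x)) ^ 2)
        - (deriv f x / (1 - f x)) ^ 2 := by
  have hx_eq := hf x
  field_simp at hx_eq ⊢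
  linear_combination -hx_eq

lemma IsDarkSoliton.integral_convolution_mul_eq {f h : ℝ → ℝ} (hf : IsDarkSoliton W c f)
    (hne : ∀ x, 1 - f x ≠ 0) (hψ : MemLp (fun x => f x / (1 - f x)) 2)
    (hψ_sq : MemLp (fun x => (f x / (1 - f x)) ^ 2) 2)
    (hφ' : MemLp (fun x => deriv (deriv f) x / (1 - f x) + (deriv f x / (1 - f x)) ^ 2) 2)
    (hφ_sq : MemLp (fun x => (deriv f x / (1 - f x)) ^ 2) 2) (hh : MemLp h 2) :
    4 * ∫ x, (∫ t, W t * f (x - t)) * h x =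
      c ^ 2 * (2 * (∫ x, f x / (1 - f x) * h x) + ∫ x, (f x / (1 - f x)) ^ 2 * h x)
        + 2 * (∫ x, (deriv (deriv f) x / (1 - f x) + (deriv f x / (1 - f x)) ^ 2) * h x)
        - ∫ x, (deriv f x / (1 - f x)) ^ 2 * h x := by
  have hψh : Integrable fun x => f x / (1 - f x) * h x := hψ.integrable_mul hh
  have hψ_sqh : Integrable fun x => (f x / (1 - f x)) ^ 2 * h x := hψ_sq.integrable_mul hh
  have hφ'h : Integrable fun x =>
      (deriv (deriv f) x / (1 - f x) + (deriv f x / (1 - f x)) ^ 2) * h x := hφ'.integrable_mul hh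
  have hφ_sqh : Integrable fun x => (deriv f x / (1 - f x)) ^ 2 * h x := hφ_sq.integrable_mul hh
  calc 4 * ∫ x, (∫ t, W t * f (x - t)) * h x
      = ∫ x, c ^ 2 * (2 * (f x / (1 - f x) * h x) + (f x / (1 - f x)) ^ 2 * h x)
          + 2 * ((deriv (deriv f) x / (1 - f x) + (deriv f x / (1 - f x)) ^ 2) * h x)
          - (deriv f x / (1 - f x)) ^ 2 * h x := by
        rw [← integral_const_mul]
        congr with x
        rw [← mul_assoc, hf.convolution_eq (hne x)]
        ring
    _ = _ := by
        rw [integral_sub (by fun_prop) hφ_sqh, integral_add (by fun_prop) (by fun_prop),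
          integral_const_mul, integral_add (by fun_prop) hψ_sqh, integral_const_mul,
          integral_const_mul]

variable {η : ℝ → ℝ → ℝ} {u v : ℝ → Lp ℝ 2 (volume : Measure ℝ)}
  {u' v' : Lp ℝ 2 (volume : Measure ℝ)}

lemma IsDarkSoliton.kinetic_variation_eq {δ S R : ℝ} (heq : IsDarkSoliton W c (η c))
    (hη : HasH1DerivAt η u v u' v' c) (hη' : Differentiable ℝ (deriv (η c)))
    (hη''_mem : MemLp (deriv (deriv (η c))) 2) (hδ : 0 < δ) (hηδ : ∀ x, δ ≤ 1 - η c x)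
    (hS : ∀ x, |η c x| ≤ S) (hR : ∀ x, |deriv (η c) x| ≤ R) :
    2 * (∫ x, deriv (η c) x / (1 - η c x) * v' x)
        + ∫ x, (deriv (η c) x / (1 - η c x)) ^ 2 * u' x =
      c ^ 2 * (2 * (∫ x, η c x / (1 - η c x) * u' x) + ∫ x, (η c x / (1 - η c x)) ^ 2 * u' x)
        - 4 * ∫ x, (∫ t, W t * η c (x - t)) * u' x := by
  have hne (x : ℝ) : 1 - η c x ≠ 0 := (hδ.trans_le (hηδ x)).ne'
  have hdiff := hη.differentiable.self_of_nhds
  have hw := hη.memLp.aemeasurable.const_sub 1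
  have hwδ : ∀ᵐ x, δ ≤ 1 - η c x := .of_forall hηδ
  have hψ := memLp_div_of_ae_le hδ hη.memLp hw hwδ
  have hψ_sq := memLp_sq_div_of_ae_le hδ hη.memLp hw hwδ (.of_forall hS)
  have hφ := memLp_div_of_ae_le hδ hη.memLp_deriv hw hwδ
  have hφ_sq := memLp_sq_div_of_ae_le hδ hη.memLp_deriv hw hwδ (.of_forall hR)
  have hφ' := (memLp_div_of_ae_le hδ hη''_mem hw hwδ).add hφ_sq
  have by_parts := hη.integral_mul_eq_neg
    (fun x => hasDerivAt_deriv_div_one_sub (hdiff x) (hη' x) (hne x)) hφ hφ'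
  rw [by_parts, heq.integral_convolution_mul_eq hne hψ hψ_sq hφ' hφ_sq (Lp.memLp u')]
  ring

lemma HasH1DerivAt.hasDerivAt_integral_convolution_mul (hη : HasH1DerivAt η u v u' v' c)
    (hW_int : Integrable W) (hW_even : ∀ x, W (-x) = W x) :
    HasDerivAt (fun d => ∫ x, (∫ t, W t * η d (x - t)) * η d x)
      (2 * ∫ x, (∫ t, W t * η c (x - t)) * u' x) c := by
  rw [← convolutionForm_eq_integral hW_int hη.ae_eq.self_of_nhds (v := u') .rfl]
  refine (hasDerivAt_convolutionForm_self hW_int hW_even hη.hasDerivAt).congr_of_eventuallyEq ?_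
  filter_upwards [hη.ae_eq] with d hd using (convolutionForm_eq_integral hW_int hd hd).symm

theorem hamilton_group_relation_general (hW_int : Integrable W) (hW_even : ∀ x, W (-x) = W x)
    (hη : HasH1DerivAt η u v u' v' c) (hη' : Differentiable ℝ (deriv (η c)))
    (hη''_mem : MemLp (deriv (deriv (η c))) 2) (hsup : ∃ M < 1, ∀ x, η c x ≤ M)
    (heq : IsDarkSoliton W c (η c)) :
    ∃ p', HasDerivAt (fun d => hydroMomentum d (η d)) p' c ∧
      HasDerivAt (fun d => hydroEnergy W d (η d)) (c * p') c := by
  obtain ⟨δ, hδ, hηδ⟩ := hη.exists_eventually_le_one_sub hsup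
  obtain ⟨S, hS⟩ := exists_forall_abs_le_of_memLp_deriv hη.differentiable.self_of_nhds
    hη.memLp hη.memLp_deriv
  obtain ⟨R, hR⟩ := exists_forall_abs_le_of_memLp_deriv hη' hη.memLp_deriv hη''_mem
  have hηδ_ae : ∀ᶠ d in 𝓝 c, ∀ᵐ x, δ ≤ 1 - η d x := hηδ.mono fun _ hd => .of_forall hd
  have hpotential := hasDerivAt_integral_sq_div_one_sub hη.hasDerivAt hη.hasDerivAt
    hη.ae_eq hη.ae_eq hδ hηδ_ae (.of_forall hS)
  have hkinetic := hasDerivAt_integral_sq_div_one_sub hη.hasDerivAt hη.hasDerivAt_deriv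
    hη.ae_eq hη.ae_eq_deriv hδ hηδ_ae (.of_forall hR)
  have hinteraction := hη.hasDerivAt_integral_convolution_mul hW_int hW_even
  rw [heq.kinetic_variation_eq hη hη' hη''_mem hδ hηδ.self_of_nhds hS hR] at hkinetic
  refine ⟨_, ((hasDerivAt_id c).div_const 4).mul hpotential, ?_⟩
  refine (((((hasDerivAt_pow 2 c).div_const 8).mul hpotential).add
    (hkinetic.const_mul (1 / 8))).add (hinteraction.const_mul (1 / 4))).congr_deriv ?_
  simp only [id]
  ring

end DarkSoliton

end

/-- Hamilton group relation along a `C¹` branch of dark solitons: if `c ↦ η(c)` is a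
continuously differentiable map from `(0, c₀)` into `H²(ℝ)` (encoded via the maps
`c ↦ iteratedDeriv j (η c)`, `j = 0, 1, 2`, being `C¹` into `L²(ℝ)`), each `η(c)` has
supremum `< 1` and solves the hydrodynamic traveling-wave equation, then the energy
`Ẽ` and momentum `P̃` are differentiable and satisfy `Ẽ'(c) = c P̃'(c)` on `(0, c₀)`. -/
theorem hamilton_group_relation
    (W : ℝ → ℝ) (hW_int : Integrable W) (hW_even : ∀ x, W (-x) = W x)
    (c₀ : ℝ) (hc₀ : 0 < c₀)
    (η : ℝ → ℝ → ℝ)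
    (hη_smooth : ∀ c ∈ Set.Ioo (0 : ℝ) c₀, ContDiff ℝ (⊤ : ℕ∞) (η c))
    (hη_sup : ∀ c ∈ Set.Ioo (0 : ℝ) c₀, ∃ M : ℝ, M < 1 ∧ ∀ x, η c x ≤ M)
    (F : Fin 3 → ℝ → MeasureTheory.Lp ℝ 2 (volume : Measure ℝ))
    (hF_C1 : ∀ j : Fin 3, ContDiffOn ℝ 1 (F j) (Set.Ioo (0 : ℝ) c₀))
    (hF_eq : ∀ j : Fin 3, ∀ c ∈ Set.Ioo (0 : ℝ) c₀,
      (F j c : ℝ → ℝ) =ᵐ[volume] iteratedDeriv (j : ℕ) (η c))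
    (heq : ∀ c ∈ Set.Ioo (0 : ℝ) c₀, ∀ x : ℝ,
      deriv (deriv (η c)) x - 2 * (∫ t : ℝ, W t * η c (x - t)) + c ^ 2 * η c x
        + c ^ 2 * (η c x) ^ 2 / (2 * (1 - η c x))
        + (deriv (η c) x) ^ 2 / (2 * (1 - η c x))
        + 2 * (∫ t : ℝ, W t * η c (x - t)) * η c x = 0)
    (E P : ℝ → ℝ)
    (hE : ∀ c : ℝ, E c = c ^ 2 / 8 * (∫ x : ℝ, (η c x) ^ 2 / (1 - η c x))
        + 1 / 8 * (∫ x : ℝ, (deriv (η c) x) ^ 2 / (1 - η c x))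
        + 1 / 4 * (∫ x : ℝ, (∫ t : ℝ, W t * η c (x - t)) * η c x))
    (hP : ∀ c : ℝ, P c = c / 4 * ∫ x : ℝ, (η c x) ^ 2 / (1 - η c x)) :
    ∀ c ∈ Set.Ioo (0 : ℝ) c₀, ∃ p' : ℝ, HasDerivAt P p' c ∧ HasDerivAt E (c * p') c := by
  intro c hc
  have hs : Set.Ioo 0 c₀ ∈ 𝓝 c := Ioo_mem_nhds hc.1 hc.2
  have hsmooth {d : ℝ} (hd : d ∈ Set.Ioo 0 c₀) := contDiff_infty_iff_deriv.1 (hη_smooth d hd)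
  have hF_deriv (j : Fin 3) : HasDerivAt (F j) (deriv (F j) c) c :=
    (((hF_C1 j).differentiableOn one_ne_zero).differentiableAt hs).hasDerivAt
  have hbranch : HasH1DerivAt η (F 0) (F 1) (deriv (F 0) c) (deriv (F 1) c) c :=
    { differentiable := eventually_of_mem hs fun d hd => (hsmooth hd).1
      ae_eq := eventually_of_mem hs fun d hd => by simpa using hF_eq 0 d hd
      ae_eq_deriv := eventually_of_mem hs fun d hd => by simpa using hF_eq 1 d hd
      hasDerivAt := hF_deriv 0
      hasDerivAt_deriv := hF_deriv 1 }
  have hη''_ae : F 2 c =ᵐ[volume] deriv (deriv (η c)) := by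
    simpa [iteratedDeriv_succ] using hF_eq 2 c hc
  rw [funext hE, funext hP]
  exact hamilton_group_relation_general hW_int hW_even hbranch
    (contDiff_infty_iff_deriv.1 (hsmooth hc).2).1 (memLp_of_coeFn_ae_eq hη''_ae)
    (hη_sup c hc) (heq c hc)
end

section
/- Let λ ≥ 1/√2. Then inf_{ξ ∈ ℝ} (ξ² + 2·e^{−λ²ξ²}) = (1 + ln(2λ²))/λ². Consequently, for the Gaussian potential with Fourier transform Ŵ_λ(ξ) = e^{−λ²ξ²}, the Landau critical speed c_L(λ) = inf_{ξ ≠ 0} √(ξ⁴ + 2 Ŵ_λ(ξ) ξ²)/|ξ| equals √(1 + ln(2λ²))/λ. -/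
/-!
Put `u = ξ²`. The inequality `x + 1 ≤ exp x` at `x = log (c * b) - b * u` bounds
`u + c * exp (-(b * u))` from below by `(1 + log (c * b)) / b`, with equality where `x = 0`, that is
at `u = log (c * b) / b`; this is a square as soon as `1 ≤ c * b`. Division by `|ξ|` turns the
dispersion relation into `√(ξ² + 2 Ŵ(ξ))`, which is continuous, so leaving out `ξ = 0` does not
change its infimum.
-/

open Real Set

/-- The Bogoliubov dispersion relation `ω(ξ) = √(ξ⁴ + 2 Ŵ(ξ) ξ²)`, as a function of the Fourier
transform `What` of the potential, which is taken to be real-valued. -/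
noncomputable def bogoliubovDispersion (What : ℝ → ℝ) (ξ : ℝ) : ℝ :=
  √(ξ ^ 4 + 2 * What ξ * ξ ^ 2)

theorem isGLB_range_sqrt {ι : Type*} [Nonempty ι] {f : ι → ℝ} {m : ℝ}
    (hm : IsGLB (range f) m) : IsGLB (range fun i => √(f i)) √m := by
  have h := hm.isGLB_of_tendsto (Real.sqrt_monotone.monotoneOn _) (range_nonempty f)
    continuous_sqrt.continuousWithinAt
  rwa [← range_comp] at h

section Dispersion

variable {What : ℝ → ℝ} {ξ m : ℝ}

theorem bogoliubovDispersion_div_abs (hξ : ξ ≠ 0) :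
    bogoliubovDispersion What ξ / |ξ| = √(ξ ^ 2 + 2 * What ξ) := by
  have factor : ξ ^ 4 + 2 * What ξ * ξ ^ 2 = (ξ ^ 2 + 2 * What ξ) * ξ ^ 2 := by ring
  rw [bogoliubovDispersion, factor, sqrt_mul' _ (sq_nonneg ξ), sqrt_sq_eq_abs,
    mul_div_cancel_right₀ _ (abs_ne_zero.mpr hξ)]

theorem isGLB_bogoliubovDispersion_div_abs (hW : Continuous What)
    (hm : IsGLB (range fun ξ => ξ ^ 2 + 2 * What ξ) m) :
    IsGLB ((fun ξ => bogoliubovDispersion What ξ / |ξ|) '' {ξ | ξ ≠ 0}) √m := by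
  have image_eq : (fun ξ => bogoliubovDispersion What ξ / |ξ|) '' {ξ | ξ ≠ 0} =
      (fun ξ => √(ξ ^ 2 + 2 * What ξ)) '' {0}ᶜ :=
    image_congr fun _ => bogoliubovDispersion_div_abs
  rw [image_eq, isGLB_congr ((dense_compl_singleton 0).lowerBounds_image (by fun_prop))]
  exact isGLB_range_sqrt hm

end Dispersion

section Minimum

variable {b c : ℝ}

theorem one_add_log_div_le_add_mul_exp_neg (hb : 0 < b) (hc : 0 < c) (u : ℝ) :
    (1 + log (c * b)) / b ≤ u + c * exp (-(b * u)) := by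
  rw [div_le_iff₀ hb]
  calc 1 + log (c * b) = b * u + (log (c * b) + -(b * u) + 1) := by ring
    _ ≤ b * u + exp (log (c * b) + -(b * u)) := by gcongr; exact add_one_le_exp _
    _ = (u + c * exp (-(b * u))) * b := by rw [exp_add, exp_log (mul_pos hc hb)]; ring

theorem log_div_add_mul_exp_neg (hb : 0 < b) (hc : 0 < c) :
    log (c * b) / b + c * exp (-(b * (log (c * b) / b))) = (1 + log (c * b)) / b := by
  rw [mul_div_cancel₀ _ hb.ne', exp_neg, exp_log (mul_pos hc hb)]
  field_simp
  ring

theorem isLeast_range_sq_add_mul_exp_neg (hb : 0 < b) (hbc : 1 ≤ c * b) :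
    IsLeast (range fun ξ : ℝ => ξ ^ 2 + c * exp (-(b * ξ ^ 2))) ((1 + log (c * b)) / b) := by
  have hc : 0 < c := pos_of_mul_pos_left (one_pos.trans_le hbc) hb.le
  have minimizer_sq : √(log (c * b) / b) ^ 2 = log (c * b) / b :=
    sq_sqrt (div_nonneg (log_nonneg hbc) hb.le)
  refine ⟨⟨√(log (c * b) / b), ?_⟩, ?_⟩
  · simp only [minimizer_sq, log_div_add_mul_exp_neg hb hc]
  · rintro _ ⟨ξ, rfl⟩
    exact one_add_log_div_le_add_mul_exp_neg hb hc (ξ ^ 2)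

end Minimum

/-- For the Gaussian potential `Ŵ_λ(ξ) = e^{-λ²ξ²}` with `λ ≥ 1/√2`:
`inf_ξ (ξ² + 2e^{-λ²ξ²}) = (1 + ln(2λ²))/λ²`, and the Landau critical speed
`inf_{ξ ≠ 0} √(ξ⁴ + 2Ŵ_λ(ξ)ξ²)/|ξ|` equals `√(1 + ln(2λ²))/λ`. -/
theorem landau_speed_gaussian
    (lam : ℝ) (hlam : 1 / Real.sqrt 2 ≤ lam) :
    IsGLB (Set.range fun ξ : ℝ => ξ ^ 2 + 2 * Real.exp (-(lam ^ 2 * ξ ^ 2)))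
      ((1 + Real.log (2 * lam ^ 2)) / lam ^ 2) ∧
    IsGLB
      ((fun ξ : ℝ => Real.sqrt (ξ ^ 4 + 2 * Real.exp (-(lam ^ 2 * ξ ^ 2)) * ξ ^ 2) / |ξ|) ''
        {ξ : ℝ | ξ ≠ 0})
      (Real.sqrt (1 + Real.log (2 * lam ^ 2)) / lam) := by
  have lam_pos : 0 < lam := lt_of_lt_of_le (by positivity) hlam
  have one_le_two_mul_sq : 1 ≤ 2 * lam ^ 2 := by
    have half_le_sq := pow_le_pow_left₀ (by positivity) hlam 2
    rw [div_pow, sq_sqrt zero_le_two] at half_le_sq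
    linarith
  have sqrt_min : √((1 + log (2 * lam ^ 2)) / lam ^ 2) = √(1 + log (2 * lam ^ 2)) / lam := by
    rw [sqrt_div' _ (sq_nonneg lam), sqrt_sq lam_pos.le]
  have isGLB_min := (isLeast_range_sq_add_mul_exp_neg (pow_pos lam_pos 2) one_le_two_mul_sq).isGLB
  refine ⟨isGLB_min, ?_⟩
  rw [← sqrt_min]
  exact isGLB_bogoliubovDispersion_div_abs
    (What := fun ξ => exp (-(lam ^ 2 * ξ ^ 2))) (by fun_prop) isGLB_min
end
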